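/- Let H, K, L be complex Hilbert spaces and let 𝒰 ⊆ B(K,L) and 𝒱 ⊆ B(H,K) be ternary rings of operators that semi-commute, i.e. u₁*u₂ commutes with v₁v₂* for all u₁,u₂ ∈ 𝒰 and v₁,v₂ ∈ 𝒱. Assume 𝒱 is left non-degenerate, i.e. the linear span of {v*ξ : v ∈ 𝒱, ξ ∈ K} is dense in H. Let R ⊆ B(K) denote the norm-closed linear span of {u₁*u₂ : u₁,u₂ ∈ 𝒰}, which is a C*-subalgebra of B(K). Then there exists a *-homomorphism ρ : R → B(H) such that ρ(b) v* = v* b for every b ∈ R and v ∈ 𝒱, and such that ρ(b) commutes with v₁*v₂ for all b ∈ R and v₁,v₂ ∈ 𝒱. -/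

import Mathlib

/-!
Let `M` be the commutant of `𝒱𝒱*` in `B(K)`; by semi-commutation it contains `R𝒰`. The formula
`ρ(b) (∑ v* ξᵥ) = ∑ v* b ξᵥ` is forced, and it has to be shown that it defines a bounded operator.
Commutation with `w v*` gives `⟪∑ v* b ξᵥ, ∑ w* η_w⟫ = ⟪∑ v* ξᵥ, ∑ w* b* η_w⟫`, so for unitary
`b ∈ M` the formula preserves norms. Since the C⋆-algebra `M` is spanned by its unitaries, the
formula is bounded for every `b ∈ M`, and it extends to `H` by non-degeneracy. The same identity
shows that `ρ` is a ⋆-homomorphism, and taking adjoints in `ρ(b*) v* = v* b*` gives `v ρ(b) = b v`,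
whence `ρ(b) v₁* v₂ = v₁* b v₂ = v₁* v₂ ρ(b)`.
-/

section CommutantLift

open ContinuousLinearMap

local instance isScalarTower_continuousLinearMap {R M : Type*} [CommRing R] [TopologicalSpace M]
    [AddCommGroup M] [IsTopologicalAddGroup M] [Module R M] [ContinuousConstSMul R M] :
    IsScalarTower R (M →L[R] M) M :=
  ⟨fun _ _ _ ↦ rfl⟩

variable {H K : Type*}
  [NormedAddCommGroup H] [InnerProductSpace ℂ H] [CompleteSpace H]
  [NormedAddCommGroup K] [InnerProductSpace ℂ K] [CompleteSpace K]

/-- The commutant of `𝒱𝒱* = {v w* : v, w ∈ 𝒱}` in `B(K)`, on which the lift `ρ` is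
constructed. -/
noncomputable def commutantMulAdjoint (𝒱 : Set (H →L[ℂ] K)) : StarSubalgebra ℂ (K →L[ℂ] K) :=
  StarSubalgebra.centralizer ℂ {x | ∃ v ∈ 𝒱, ∃ w ∈ 𝒱, x = v ∘L adjoint w}

/-- The map `ξ ↦ ∑ v* ξᵥ` from finitely supported families in `K` indexed by `𝒱` to `H`. Its range
is the span of the ranges of the `v*`. An operator `b` on `K` acts on families coordinatewise, by
the scalar multiplication of `𝒱 →₀ K` as a module over `K →L[ℂ] K`. -/
noncomputable def adjointSum (𝒱 : Set (H →L[ℂ] K)) : (𝒱 →₀ K) →ₗ[ℂ] H :=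
  Finsupp.lsum ℂ fun v : 𝒱 ↦ (adjoint (v : H →L[ℂ] K)).toLinearMap

variable {𝒱 : Set (H →L[ℂ] K)}

lemma mem_commutantMulAdjoint {b : K →L[ℂ] K} :
    b ∈ commutantMulAdjoint 𝒱 ↔ ∀ v ∈ 𝒱, ∀ w ∈ 𝒱, Commute b (v ∘L adjoint w) := by
  rw [commutantMulAdjoint, StarSubalgebra.mem_centralizer_iff]
  constructor
  · intro h v hv w hw
    exact (h _ ⟨v, hv, w, hw, rfl⟩).1.symm
  · rintro h _ ⟨v, hv, w, hw, rfl⟩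
    have star_comp : star (v ∘L adjoint w) = w ∘L adjoint v := by
      rw [star_eq_adjoint, adjoint_comp, adjoint_adjoint]
    exact ⟨(h v hv w hw).eq.symm, star_comp ▸ (h w hw v hv).eq.symm⟩

instance isClosed_commutantMulAdjoint :
    IsClosed (commutantMulAdjoint 𝒱 : Set (K →L[ℂ] K)) :=
  Set.isClosed_centralizer _

lemma closure_span_subset_commutantMulAdjoint {s : Set (K →L[ℂ] K)}
    (hs : s ⊆ commutantMulAdjoint 𝒱) :
    closure (Submodule.span ℂ s : Set (K →L[ℂ] K)) ⊆ commutantMulAdjoint 𝒱 :=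
  closure_minimal
    (Submodule.span_le (p := (commutantMulAdjoint 𝒱).toSubalgebra.toSubmodule).2 hs)
    isClosed_commutantMulAdjoint

lemma adjointSum_single (v : 𝒱) (ξ : K) :
    adjointSum 𝒱 (Finsupp.single v ξ) = adjoint (v : H →L[ℂ] K) ξ := by
  simp [adjointSum]

lemma denseRange_adjointSum
    (h : Dense (Submodule.span ℂ {x : H | ∃ v ∈ 𝒱, ∃ ξ : K, x = adjoint v ξ} : Set H)) :
    DenseRange (adjointSum 𝒱) := by
  refine h.mono (Submodule.span_le (p := (adjointSum 𝒱).range).2 ?_)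
  rintro _ ⟨v, hv, ξ, rfl⟩
  exact ⟨Finsupp.single ⟨v, hv⟩ ξ, adjointSum_single _ _⟩

lemma inner_adjointSum_smul_left (b : commutantMulAdjoint 𝒱) (f g : 𝒱 →₀ K) :
    inner ℂ (adjointSum 𝒱 ((b : K →L[ℂ] K) • f)) (adjointSum 𝒱 g) =
      inner ℂ (adjointSum 𝒱 f) (adjointSum 𝒱 ((star b : K →L[ℂ] K) • g)) := by
  induction f using Finsupp.induction_linear with
  | zero => simp
  | add f₁ f₂ h₁ h₂ => simp only [smul_add, map_add, inner_add_left, h₁, h₂]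
  | single v ξ =>
    induction g using Finsupp.induction_linear with
    | zero => simp
    | add g₁ g₂ h₁ h₂ => simp only [smul_add, map_add, inner_add_right, h₁, h₂]
    | single w η =>
      have commutes : (b : K →L[ℂ] K) ((w : H →L[ℂ] K) (adjoint (v : H →L[ℂ] K) ξ)) =
          (w : H →L[ℂ] K) (adjoint (v : H →L[ℂ] K) ((b : K →L[ℂ] K) ξ)) :=
        DFunLike.congr_fun (mem_commutantMulAdjoint.1 b.2 w w.2 v v.2).eq ξ
      simp only [Finsupp.smul_single, adjointSum_single, adjoint_inner_right, star_eq_adjoint,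
        ContinuousLinearMap.smul_def, commutes]

lemma norm_adjointSum_unitary_smul {u : commutantMulAdjoint 𝒱} (hu : u ∈ unitary _)
    (f : 𝒱 →₀ K) : ‖adjointSum 𝒱 ((u : K →L[ℂ] K) • f)‖ = ‖adjointSum 𝒱 f‖ := by
  have star_mul_self : (star u : K →L[ℂ] K) * u = 1 :=
    congrArg Subtype.val (Unitary.star_mul_self_of_mem hu)
  rw [norm_eq_sqrt_re_inner (𝕜 := ℂ), norm_eq_sqrt_re_inner (𝕜 := ℂ),
    inner_adjointSum_smul_left, ← mul_smul, star_mul_self, one_smul]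

lemma exists_norm_adjointSum_smul_le (b : commutantMulAdjoint 𝒱) :
    ∃ C, ∀ f : 𝒱 →₀ K, ‖adjointSum 𝒱 ((b : K →L[ℂ] K) • f)‖ ≤ C * ‖adjointSum 𝒱 f‖ := by
  have hb : b ∈ Submodule.span ℂ (unitary (commutantMulAdjoint 𝒱) : Set _) := by
    rw [CStarAlgebra.span_unitary]
    trivial
  induction hb using Submodule.span_induction with
  | mem u hu => exact ⟨1, fun f ↦ by rw [norm_adjointSum_unitary_smul hu, one_mul]⟩
  | zero => exact ⟨0, fun f ↦ by simp⟩
  | add b₁ b₂ _ _ h₁ h₂ =>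
    obtain ⟨C₁, hC₁⟩ := h₁
    obtain ⟨C₂, hC₂⟩ := h₂
    refine ⟨C₁ + C₂, fun f ↦ ?_⟩
    rw [AddMemClass.coe_add, add_smul, map_add, add_mul]
    exact norm_add_le_of_le (hC₁ f) (hC₂ f)
  | smul c b _ h =>
    obtain ⟨C, hC⟩ := h
    refine ⟨‖c‖ * C, fun f ↦ ?_⟩
    rw [SetLike.val_smul, smul_assoc, map_smul, norm_smul, mul_assoc]
    gcongr
    exact hC f

/-- The operator `ρ(b)`, the extension by continuity of `∑ v* ξᵥ ↦ ∑ v* b ξᵥ` to `H`. It has a junk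
value unless `adjointSum 𝒱` has dense range. -/
noncomputable def liftOperator (b : commutantMulAdjoint 𝒱) : H →L[ℂ] H :=
  (adjointSum 𝒱 ∘ₗ DistribSMul.toLinearMap ℂ (𝒱 →₀ K) (b : K →L[ℂ] K)).extendOfNorm (adjointSum 𝒱)

lemma liftOperator_adjointSum (hd : DenseRange (adjointSum 𝒱)) (b : commutantMulAdjoint 𝒱)
    (f : 𝒱 →₀ K) :
    liftOperator b (adjointSum 𝒱 f) = adjointSum 𝒱 ((b : K →L[ℂ] K) • f) :=
  LinearMap.extendOfNorm_eq hd (exists_norm_adjointSum_smul_le b) f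

lemma ext_adjointSum (hd : DenseRange (adjointSum 𝒱)) {S T : H →L[ℂ] H}
    (h : ∀ f, S (adjointSum 𝒱 f) = T (adjointSum 𝒱 f)) : S = T :=
  DFunLike.coe_injective (hd.equalizer S.continuous T.continuous (funext h))

lemma liftOperator_star (hd : DenseRange (adjointSum 𝒱)) (b : commutantMulAdjoint 𝒱) :
    liftOperator (star b) = star (liftOperator b) := by
  refine ext_adjointSum hd fun g ↦ hd.eq_of_inner_left (𝕜 := ℂ) fun f ↦ ?_
  rw [star_eq_adjoint (liftOperator b), adjoint_inner_left, liftOperator_adjointSum hd,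
    liftOperator_adjointSum hd, inner_adjointSum_smul_left,
    StarMemClass.coe_star, star_star]

/-- The ⋆-homomorphism `ρ` of the theorem, on the whole commutant of `𝒱𝒱*`. -/
noncomputable def commutantLift (hd : DenseRange (adjointSum 𝒱)) :
    commutantMulAdjoint 𝒱 →⋆ₐ[ℂ] (H →L[ℂ] H) where
  __ := AlgHom.ofLinearMap
    { toFun := liftOperator
      map_add' := fun b₁ b₂ ↦ ext_adjointSum hd fun f ↦ by
        simp only [add_apply, liftOperator_adjointSum hd, AddMemClass.coe_add, add_smul, map_add]
      map_smul' := fun c b ↦ ext_adjointSum hd fun f ↦ by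
        simp only [RingHom.id_apply, smul_apply, liftOperator_adjointSum hd, SetLike.val_smul,
          smul_assoc, map_smul] }
    (ext_adjointSum hd fun f ↦ by
      simp only [LinearMap.coe_mk, AddHom.coe_mk, one_apply_eq_self, liftOperator_adjointSum hd,
        OneMemClass.coe_one, one_smul])
    (fun b₁ b₂ ↦ ext_adjointSum hd fun f ↦ by
      simp only [LinearMap.coe_mk, AddHom.coe_mk, mul_apply_eq_comp, liftOperator_adjointSum hd,
        MulMemClass.coe_mul, mul_smul])
  map_star' := liftOperator_star hd

lemma commutantLift_comp_adjoint (hd : DenseRange (adjointSum 𝒱)) (b : commutantMulAdjoint 𝒱)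
    {v : H →L[ℂ] K} (hv : v ∈ 𝒱) :
    commutantLift hd b ∘L adjoint v = adjoint v ∘L (b : K →L[ℂ] K) := by
  ext ξ
  have h := liftOperator_adjointSum hd b (Finsupp.single ⟨v, hv⟩ ξ)
  rw [Finsupp.smul_single, adjointSum_single, adjointSum_single] at h
  exact h

lemma comp_commutantLift (hd : DenseRange (adjointSum 𝒱)) (b : commutantMulAdjoint 𝒱)
    {v : H →L[ℂ] K} (hv : v ∈ 𝒱) :
    v ∘L commutantLift hd b = (b : K →L[ℂ] K) ∘L v := by
  have h := congrArg adjoint (commutantLift_comp_adjoint hd (star b) hv)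
  simpa only [map_star, star_eq_adjoint, StarMemClass.coe_star, adjoint_comp, adjoint_adjoint]
    using h

lemma commute_commutantLift_adjoint_comp (hd : DenseRange (adjointSum 𝒱))
    (b : commutantMulAdjoint 𝒱) {v₁ v₂ : H →L[ℂ] K} (hv₁ : v₁ ∈ 𝒱) (hv₂ : v₂ ∈ 𝒱) :
    Commute (commutantLift hd b) (adjoint v₁ ∘L v₂) :=
  calc
    commutantLift hd b ∘L (adjoint v₁ ∘L v₂) = adjoint v₁ ∘L ((b : K →L[ℂ] K) ∘L v₂) := by
      rw [← ContinuousLinearMap.comp_assoc, commutantLift_comp_adjoint hd b hv₁,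
        ContinuousLinearMap.comp_assoc]
    _ = (adjoint v₁ ∘L v₂) ∘L commutantLift hd b := by
      rw [← comp_commutantLift hd b hv₂, ContinuousLinearMap.comp_assoc]

end CommutantLift

open ContinuousLinearMap in
theorem statement0_general
    {H K L : Type*}
    [NormedAddCommGroup H] [InnerProductSpace ℂ H] [CompleteSpace H]
    [NormedAddCommGroup K] [InnerProductSpace ℂ K] [CompleteSpace K]
    [NormedAddCommGroup L] [InnerProductSpace ℂ L] [CompleteSpace L]
    (𝒰 : Set (K →L[ℂ] L)) (𝒱 : Set (H →L[ℂ] K))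
    (hsemi : ∀ u₁ ∈ 𝒰, ∀ u₂ ∈ 𝒰, ∀ v₁ ∈ 𝒱, ∀ v₂ ∈ 𝒱,
      Commute ((adjoint u₁) ∘L u₂) (v₁ ∘L (adjoint v₂)))
    (hnondeg : Dense
      ((Submodule.span ℂ {x : H | ∃ v ∈ 𝒱, ∃ ξ : K, x = (adjoint v) ξ}) : Set H))
    (R𝒰 : Set (K →L[ℂ] K))
    (hR𝒰 : R𝒰 = closure
      ((Submodule.span ℂ {b : K →L[ℂ] K | ∃ u₁ ∈ 𝒰, ∃ u₂ ∈ 𝒰, b = (adjoint u₁) ∘L u₂}) :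
        Set (K →L[ℂ] K))) :
    ∃ ρ : (K →L[ℂ] K) → (H →L[ℂ] H),
      (∀ b₁ ∈ R𝒰, ∀ b₂ ∈ R𝒰, ρ (b₁ + b₂) = ρ b₁ + ρ b₂) ∧
      (∀ (c : ℂ), ∀ b ∈ R𝒰, ρ (c • b) = c • ρ b) ∧
      (∀ b₁ ∈ R𝒰, ∀ b₂ ∈ R𝒰, ρ (b₁ * b₂) = ρ b₁ * ρ b₂) ∧
      (∀ b ∈ R𝒰, ρ (star b) = star (ρ b)) ∧
      (∀ b ∈ R𝒰, ∀ v ∈ 𝒱, (ρ b) ∘L (adjoint v) = (adjoint v) ∘L b) ∧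
      (∀ b ∈ R𝒰, ∀ v₁ ∈ 𝒱, ∀ v₂ ∈ 𝒱, Commute (ρ b) ((adjoint v₁) ∘L v₂)) := by
  have hd : DenseRange (adjointSum 𝒱) := denseRange_adjointSum hnondeg
  have hR : ∀ b ∈ R𝒰, b ∈ commutantMulAdjoint 𝒱 := by
    rw [hR𝒰]
    refine closure_span_subset_commutantMulAdjoint ?_
    rintro _ ⟨u₁, hu₁, u₂, hu₂, rfl⟩
    exact mem_commutantMulAdjoint.2 (hsemi u₁ hu₁ u₂ hu₂)
  obtain ⟨ρ, hρ⟩ : ∃ ρ : (K →L[ℂ] K) → (H →L[ℂ] H),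
      ∀ b : commutantMulAdjoint 𝒱, ρ b = commutantLift hd b :=
    ⟨Function.extend Subtype.val (commutantLift hd) 0, Subtype.val_injective.extend_apply _ _⟩
  have hρR : ∀ b (hb : b ∈ R𝒰), ρ b = commutantLift hd ⟨b, hR b hb⟩ := fun b hb ↦ hρ ⟨b, hR b hb⟩
  refine ⟨ρ, fun b₁ hb₁ b₂ hb₂ ↦ ?_, fun c b hb ↦ ?_, fun b₁ hb₁ b₂ hb₂ ↦ ?_, fun b hb ↦ ?_,
    fun b hb v hv ↦ ?_, fun b hb v₁ hv₁ v₂ hv₂ ↦ ?_⟩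
  · rw [hρR b₁ hb₁, hρR b₂ hb₂, ← map_add, ← hρ]; rfl
  · rw [hρR b hb, ← map_smul, ← hρ]; rfl
  · rw [hρR b₁ hb₁, hρR b₂ hb₂, ← map_mul, ← hρ]; rfl
  · rw [hρR b hb, ← map_star, ← hρ]; rfl
  · rw [hρR b hb, commutantLift_comp_adjoint hd _ hv]
  · rw [hρR b hb]
    exact commute_commutantLift_adjoint_comp hd _ hv₁ hv₂

open ContinuousLinearMap in
/-- (Commutant lifting for semi-commuting TROs.)
Let `𝒰 ⊆ B(K,L)` and `𝒱 ⊆ B(H,K)` be TROs that semi-commute, with `𝒱` left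
non-degenerate, and let `R𝒰` be the norm-closed linear span of `{u₁* u₂}`.
Then there is a *-homomorphism `ρ : R𝒰 → B(H)` with `ρ(b) v* = v* b` for all
`b ∈ R𝒰`, `v ∈ 𝒱`, whose range commutes with all `v₁* v₂`, `v₁, v₂ ∈ 𝒱`. -/
theorem statement0
    {H K L : Type*}
    [NormedAddCommGroup H] [InnerProductSpace ℂ H] [CompleteSpace H]
    [NormedAddCommGroup K] [InnerProductSpace ℂ K] [CompleteSpace K]
    [NormedAddCommGroup L] [InnerProductSpace ℂ L] [CompleteSpace L]
    (𝒰 : Submodule ℂ (K →L[ℂ] L)) (𝒱 : Submodule ℂ (H →L[ℂ] K))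
    (h𝒰closed : IsClosed (𝒰 : Set (K →L[ℂ] L)))
    (h𝒱closed : IsClosed (𝒱 : Set (H →L[ℂ] K)))
    (h𝒰tro : ∀ S ∈ 𝒰, ∀ T ∈ 𝒰, ∀ R ∈ 𝒰, S ∘L (adjoint T) ∘L R ∈ 𝒰)
    (h𝒱tro : ∀ S ∈ 𝒱, ∀ T ∈ 𝒱, ∀ R ∈ 𝒱, S ∘L (adjoint T) ∘L R ∈ 𝒱)
    (hsemi : ∀ u₁ ∈ 𝒰, ∀ u₂ ∈ 𝒰, ∀ v₁ ∈ 𝒱, ∀ v₂ ∈ 𝒱,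
      Commute ((adjoint u₁) ∘L u₂) (v₁ ∘L (adjoint v₂)))
    (hnondeg : Dense
      ((Submodule.span ℂ {x : H | ∃ v ∈ 𝒱, ∃ ξ : K, x = (adjoint v) ξ}) : Set H))
    (R𝒰 : Set (K →L[ℂ] K))
    (hR𝒰 : R𝒰 = closure
      ((Submodule.span ℂ {b : K →L[ℂ] K | ∃ u₁ ∈ 𝒰, ∃ u₂ ∈ 𝒰, b = (adjoint u₁) ∘L u₂}) :
        Set (K →L[ℂ] K))) :
    ∃ ρ : (K →L[ℂ] K) → (H →L[ℂ] H),
      (∀ b₁ ∈ R𝒰, ∀ b₂ ∈ R𝒰, ρ (b₁ + b₂) = ρ b₁ + ρ b₂) ∧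
      (∀ (c : ℂ), ∀ b ∈ R𝒰, ρ (c • b) = c • ρ b) ∧
      (∀ b₁ ∈ R𝒰, ∀ b₂ ∈ R𝒰, ρ (b₁ * b₂) = ρ b₁ * ρ b₂) ∧
      (∀ b ∈ R𝒰, ρ (star b) = star (ρ b)) ∧
      (∀ b ∈ R𝒰, ∀ v ∈ 𝒱, (ρ b) ∘L (adjoint v) = (adjoint v) ∘L b) ∧
      (∀ b ∈ R𝒰, ∀ v₁ ∈ 𝒱, ∀ v₂ ∈ 𝒱, Commute (ρ b) ((adjoint v₁) ∘L v₂)) := by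
  exact statement0_general (𝒰 : Set (K →L[ℂ] L)) (𝒱 : Set (H →L[ℂ] K)) hsemi hnondeg R𝒰 hR𝒰
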